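/- Let S be a finite subdirectly irreducible commutative semigroup. Then E(S) ≤ D(S) + κ(S) − 1. -/

import Mathlib

namespace EGZ

variable {S : Type}

/-- `rep a n = (n+1)·a`, the (n+1)-fold sum of `a` with itself (defined for semigroups,
where the 0-fold sum is unavailable). -/
def rep [AddCommSemigroup S] (a : S) : ℕ → S
  | 0 => a
  | n + 1 => rep a n + a

/-- The sum of all terms of a sequence (= multiset) over the semigroup `S`, computed in
`WithZero S` (i.e. `S` with an extra identity element `0` adjoined); the empty sequence
has sum `0`, and a nonempty sequence has sum `↑s` where `s ∈ S` is its genuine sum. -/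
def mSum [AddCommSemigroup S] (T : Multiset S) : WithZero S :=
  (T.map (fun s => (s : WithZero S))).sum

/-- `σ(A) = σ(B)`, with the paper's convention: the empty sequence is regarded as having
sum equal to the identity element `e` of `S`, whenever `S` has an identity element. -/
def EqSum [AddCommSemigroup S] (A B : Multiset S) : Prop :=
  mSum A = mSum B ∨
    ∃ e : S, (∀ a : S, e + a = a) ∧
      ((mSum A = 0 ∧ mSum B = (e : WithZero S)) ∨
        (mSum A = (e : WithZero S) ∧ mSum B = 0))

/-- A sequence `T` over `S` is reducible if some proper subsequence `B` of `T`
satisfies `σ(B) = σ(T)`. -/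
def Reducible [AddCommSemigroup S] (T : Multiset S) : Prop :=
  ∃ B : Multiset S, B < T ∧ EqSum B T

/-- The (large) Davenport constant `D(S)`: the smallest `ℓ` such that every sequence over
`S` of length at least `ℓ` is reducible. -/
noncomputable def DavC (S : Type) [AddCommSemigroup S] : ℕ :=
  sInf {ℓ : ℕ | ∀ T : Multiset S, ℓ ≤ Multiset.card T → Reducible T}

/-- The property defining the small Davenport constant: `ℓ` is admissible if for every `m`
and every `c₁, …, c_m ∈ S` there is `J ⊆ [1, m]` with `|J| ≤ ℓ` and `Σ_{j=1}^m c_j = Σ_{j∈J} c_j`. -/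
def SmallDavProp (S : Type) [AddCommSemigroup S] (ℓ : ℕ) : Prop :=
  ∀ (m : ℕ) (c : Fin m → S), ∃ J : Finset (Fin m),
    J.card ≤ ℓ ∧ EqSum (J.val.map c) ((Finset.univ : Finset (Fin m)).val.map c)

/-- The small Davenport constant `d(S)`. -/
noncomputable def smallDavC (S : Type) [AddCommSemigroup S] : ℕ :=
  sInf {ℓ : ℕ | SmallDavProp S ℓ}

/-- The period of an element `a ∈ S`: the least `t > 0` such that `r·a = (r+t)·a`
for some `r > 0`. -/
noncomputable def period [AddCommSemigroup S] (a : S) : ℕ :=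
  sInf {t : ℕ | 0 < t ∧ ∃ k : ℕ, rep a (k + t) = rep a k}

/-- `exp(S)`: the least common multiple of the periods of all elements of `S`. -/
noncomputable def expS (S : Type) [AddCommSemigroup S] [Fintype S] : ℕ :=
  (Finset.univ : Finset S).lcm (fun a => period a)

/-- `κ(S) = ⌈|S| / exp(S)⌉ · exp(S)`. -/
noncomputable def kappa (S : Type) [AddCommSemigroup S] [Fintype S] : ℕ :=
  ((Fintype.card S + expS S - 1) / expS S) * expS S

/-- `E(S)`: the smallest positive integer `ℓ` such that every sequence `T` over `S` of
length at least `ℓ` contains a subsequence `T'` with `|T| - |T'| = κ(S)` and `σ(T') = σ(T)`. -/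
noncomputable def EC (S : Type) [AddCommSemigroup S] [Fintype S] : ℕ :=
  sInf {ℓ : ℕ | 0 < ℓ ∧ ∀ T : Multiset S, ℓ ≤ Multiset.card T →
    ∃ B : Multiset S, B ≤ T ∧ Multiset.card T - Multiset.card B = kappa S ∧ EqSum B T}

end EGZ

/-- A commutative semigroup `S` is subdirectly irreducible: whenever `S` is expressed as a
subdirect product of a family of commutative semigroups (an injective additive map into a
product all of whose component projections are surjective), one of the projections is
already injective — hence, being a surjective additive bijection, an isomorphism. -/
def SubdirectlyIrreducible (S : Type) [AddCommSemigroup S] : Prop :=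
  ∀ (ι : Type) (A : ι → Type) [∀ i, AddCommSemigroup (A i)] (φ : S → ∀ i, A i),
    Function.Injective φ →
    (∀ a b : S, φ (a + b) = φ a + φ b) →
    (∀ i, Function.Surjective fun s => φ s i) →
    ∃ i, Function.Injective fun s => φ s i

namespace EGZ

open Finset in
open scoped Pointwise in
/-- Kemperman–Scherk. -/
theorem scherk {K : Type} [AddCommGroup K] [DecidableEq K] (n : ℕ) : ∀ A B : Finset K,
    B.card = n → (0 : K) ∈ A → (0 : K) ∈ B →
    (∀ a ∈ A, ∀ b ∈ B, a + b = 0 → a = 0 ∧ b = 0) →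
    A.card + B.card ≤ (A + B).card + 1 := by
  induction n using Nat.strong_induction_on with
  | _ n ih =>
  intro A B hn hA hB hu
  by_cases hB1 : B = {0}
  · subst hB1
    simp
  obtain ⟨b, hb, hb0⟩ : ∃ b ∈ B, b ≠ 0 := by
    by_contra! h
    exact hB1 (Finset.eq_singleton_iff_unique_mem.2 ⟨hB, h⟩)
  obtain ⟨a, ha, hab⟩ : ∃ a ∈ A, a + b ∉ A := by
    by_contra! h
    have h1 : A.image (· + b) = A := by
      apply Finset.eq_of_subset_of_card_le
      · intro x hx
        obtain ⟨y, hy, rfl⟩ := Finset.mem_image.1 hx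
        exact h y hy
      · rw [Finset.card_image_of_injective _ (add_left_injective b)]
    rw [← h1] at hA
    obtain ⟨y, hy, hy0⟩ := Finset.mem_image.1 hA
    exact hb0 (hu y hy b hb hy0).2
  set A' := A ∪ B.image (a + ·) with hA'
  set B' := B.filter (fun y => a + y ∈ A) with hB'
  have hlt : B'.card < n := by
    rw [← hn]
    apply Finset.card_lt_card
    rw [Finset.ssubset_iff_of_subset (Finset.filter_subset _ _)]
    exact ⟨b, hb, by simp [hab]⟩
  have hcard : A'.card + B'.card = A.card + B.card := by
    have h1 := Finset.card_union_add_card_inter A (B.image (a + ·))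
    have h2 : (A ∩ B.image (a + ·)) = B'.image (a + ·) := by
      ext x
      simp only [hB', Finset.mem_inter, Finset.mem_image, Finset.mem_filter]
      constructor
      · rintro ⟨hx, y, hy, rfl⟩
        exact ⟨y, ⟨hy, hx⟩, rfl⟩
      · rintro ⟨y, ⟨hy, hx⟩, rfl⟩
        exact ⟨hx, y, hy, rfl⟩
    rw [h2, Finset.card_image_of_injective _ (add_right_injective a),
      Finset.card_image_of_injective _ (add_right_injective a)] at h1
    exact h1
  have hsub : A' + B' ⊆ A + B := by
    intro x hx
    obtain ⟨y, hy, w, hw, rfl⟩ := Finset.mem_add.1 hx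
    rw [hB', Finset.mem_filter] at hw
    rcases Finset.mem_union.1 hy with hy | hy
    · exact Finset.add_mem_add hy hw.1
    · obtain ⟨v, hv, rfl⟩ := Finset.mem_image.1 hy
      have : a + v + w = (a + w) + v := by abel
      rw [this]
      exact Finset.add_mem_add hw.2 hv
  have := ih _ hlt A' B' rfl (Finset.mem_union_left _ hA) (by simp [hB', hB, ha]) (by
    intro y hy w hw h0
    rw [hB', Finset.mem_filter] at hw
    rcases Finset.mem_union.1 hy with hy | hy
    · exact hu y hy w hw.1 h0
    · obtain ⟨v, hv, rfl⟩ := Finset.mem_image.1 hy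
      have h3 : (a + w) + v = 0 := by rw [← h0]; abel
      obtain ⟨h4, h5⟩ := hu _ hw.2 _ hv h3
      obtain ⟨h6, h7⟩ := hu a ha w hw.1 h4
      exact ⟨by rw [h6, h5, add_zero], h7⟩)
  have := Finset.card_le_card hsub
  omega

open scoped Pointwise in
/-- Short zero-sum subsequences. -/
theorem short_zs {K : Type} [AddCommGroup K] [Fintype K] [DecidableEq K] (h : ℕ) (W : Multiset K)
    (hW : ∀ k, W.count k ≤ h) (hc : Fintype.card K ≤ Multiset.card W) :
    ∃ V ≤ W, V ≠ 0 ∧ V.sum = 0 ∧ Multiset.card V ≤ h := by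
  by_contra! hno
  let A : ℕ → Finset K := fun i => Finset.univ.filter (fun k => i + 1 ≤ W.count k)
  have key : ∀ j ≤ h, ∃ P : Finset K, (0 : K) ∈ P ∧
      (∀ p ∈ P, ∃ V : Multiset K, V ≤ W ∧ Multiset.card V ≤ j ∧ V.sum = p ∧
        ∀ k, V.count k ≤ j) ∧
      1 + ∑ i ∈ Finset.range j, (A i).card ≤ P.card := by
    intro j
    induction j with
    | zero =>
      intro _
      refine ⟨{0}, by simp, ?_, by simp⟩
      intro p hp
      refine ⟨0, by simp, by simp, ?_, by simp⟩
      simpa using (Finset.mem_singleton.1 hp).symm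
    | succ j ih =>
      intro hj
      obtain ⟨P, h0, hP, hcard⟩ := ih (by omega)
      have ext : ∀ p ∈ P, ∀ a ∈ A j, ∃ V : Multiset K, V ≤ W ∧ V ≠ 0 ∧
          Multiset.card V ≤ j + 1 ∧ V.sum = p + a ∧ ∀ k, V.count k ≤ j + 1 := by
        intro p hp a ha
        obtain ⟨V, h1, h2, h3, h4⟩ := hP p hp
        have ha' : j + 1 ≤ W.count a := by simpa [A] using ha
        refine ⟨a ::ₘ V, ?_, by simp, by simpa using h2, by simp [h3, add_comm], ?_⟩
        · rw [Multiset.le_iff_count]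
          intro k
          rw [Multiset.count_cons]
          split_ifs with hk
          · subst hk
            have := h4 k
            omega
          · simpa using Multiset.le_iff_count.1 h1 k
        · intro k
          rw [Multiset.count_cons]
          have := h4 k
          split_ifs <;> omega
      have h0A : (0 : K) ∉ A j := by
        intro h0A
        obtain ⟨V, h1, h2, h3, h4, _⟩ := ext 0 h0 0 h0A
        have := hno V h1 h2 (by simpa using h4)
        omega
      refine ⟨P + insert 0 (A j), ?_, ?_, ?_⟩
      · exact Finset.mem_add.2 ⟨0, h0, 0, by simp, by simp⟩
      · intro p hp
        obtain ⟨q, hq, a, ha, rfl⟩ := Finset.mem_add.1 hp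
        rcases Finset.mem_insert.1 ha with rfl | ha
        · obtain ⟨V, h1, h2, h3, h4⟩ := hP q hq
          exact ⟨V, h1, by omega, by simpa using h3, fun k => (h4 k).trans (by omega)⟩
        · obtain ⟨V, h1, h2, h3, h4, h5⟩ := ext q hq a ha
          exact ⟨V, h1, h3, h4, h5⟩
      · have := scherk _ P (insert 0 (A j)) rfl h0 (by simp) (by
          intro p hp a ha hpa
          rcases Finset.mem_insert.1 ha with rfl | ha
          · simpa using hpa
          · obtain ⟨V, h1, h2, h3, h4, h5⟩ := ext p hp a ha
            have := hno V h1 h2 (h4.trans hpa)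
            omega)
        rw [Finset.card_insert_of_notMem h0A] at this
        rw [Finset.sum_range_succ]
        omega
  obtain ⟨P, -, -, hP⟩ := key h le_rfl
  have hs : ∑ i ∈ Finset.range h, (A i).card = Multiset.card W := by
    simp only [A, Finset.card_filter]
    rw [Finset.sum_comm]
    have : ∀ k : K, ∑ i ∈ Finset.range h, (if i + 1 ≤ W.count k then 1 else 0) = W.count k := by
      intro k
      rw [← Finset.card_filter]
      have : (Finset.range h).filter (fun i => i + 1 ≤ W.count k) = Finset.range (W.count k) := by
        ext i
        have := hW k
        simp only [Finset.mem_filter, Finset.mem_range]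
        omega
      rw [this, Finset.card_range]
    simp only [this]
    exact Multiset.sum_count_eq_card (by simp)
  have := Finset.card_le_univ P
  omega

theorem drop_zs {K : Type} [AddCommGroup K] [DecidableEq K] (d : ℕ)
    (hd : ∀ U : Multiset K, d ≤ Multiset.card U → ∃ V ≤ U, V ≠ 0 ∧ V.sum = 0) (m : ℕ) :
    ∀ W : Multiset K, Multiset.card W = m →
      ∃ V ≤ W, V.sum = 0 ∧ Multiset.card W + 1 ≤ Multiset.card V + d := by
  induction m using Nat.strong_induction_on with
  | _ m ih =>
  intro W hm
  by_cases hW : d ≤ Multiset.card W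
  · obtain ⟨U, hU, hU0, hUs⟩ := hd W hW
    have hUc : 0 < Multiset.card U := Multiset.card_pos.2 hU0
    have hle := Multiset.card_le_card hU
    have hc := Multiset.card_sub hU
    obtain ⟨V, hV, hVs, hVc⟩ := ih (Multiset.card (W - U)) (by omega) (W - U) rfl
    refine ⟨V + U, ?_, by simp [hVs, hUs], ?_⟩
    · calc V + U ≤ (W - U) + U := by gcongr
        _ = W := Multiset.sub_add_cancel hU
    · rw [Multiset.card_add]; omega
  · exact ⟨0, by simp, by simp, by simp; omega⟩

theorem gao_aux {K : Type} [AddCommGroup K] [Fintype K] [DecidableEq K] (d n h : ℕ)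
    (hd : ∀ U : Multiset K, d ≤ Multiset.card U → ∃ V ≤ U, V ≠ 0 ∧ V.sum = 0)
    (hn : Fintype.card K ≤ n) (m : ℕ) :
    ∀ W : Multiset K, Multiset.card W = m → (∀ k, W.count k ≤ h) →
      ∃ V ≤ W, V.sum = 0 ∧ Multiset.card V ≤ n ∧
        (Multiset.card W + 1 ≤ Multiset.card V + d ∨ n ≤ Multiset.card V + h) := by
  induction m using Nat.strong_induction_on with
  | _ m ih =>
  intro W hm hh
  by_cases hW : Fintype.card K ≤ Multiset.card W
  · obtain ⟨U, hU, hU0, hUs, hUh⟩ := short_zs h W hh hW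
    have hUc : 0 < Multiset.card U := Multiset.card_pos.2 hU0
    have hle := Multiset.card_le_card hU
    have hc := Multiset.card_sub hU
    obtain ⟨V, hV, hVs, hVn, hVc⟩ := ih (Multiset.card (W - U)) (by omega) (W - U) rfl
      (fun k => (Multiset.le_iff_count.1 (Multiset.sub_le_self W U) k).trans (hh k))
    by_cases hx : n ≤ Multiset.card V + h
    · exact ⟨V, hV.trans (Multiset.sub_le_self W U), hVs, hVn, Or.inr hx⟩
    refine ⟨V + U, ?_, by simp [hVs, hUs], ?_, ?_⟩
    · calc V + U ≤ (W - U) + U := by gcongr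
        _ = W := Multiset.sub_add_cancel hU
    · rw [Multiset.card_add]; omega
    · rw [Multiset.card_add]; omega
  · obtain ⟨V, hV, hVs, hVc⟩ := drop_zs d hd _ W rfl
    have := Multiset.card_le_card hV
    exact ⟨V, hV, hVs, by omega, Or.inl hVc⟩

theorem gao_zero {K : Type} [AddCommGroup K] [Fintype K] [DecidableEq K] (d n : ℕ)
    (hd : ∀ U : Multiset K, d ≤ Multiset.card U → ∃ V ≤ U, V ≠ 0 ∧ V.sum = 0)
    (hn : Fintype.card K ≤ n) (T : Multiset K) (hT : n + d ≤ Multiset.card T + 1)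
    (hmax : ∀ k, T.count k ≤ T.count 0) :
    ∃ V ≤ T, V.sum = 0 ∧ Multiset.card V = n := by
  have hsplit := Multiset.filter_add_not (fun k => k = 0) T
  have h1 : T.filter (fun k => k = 0) = Multiset.replicate (T.count 0) 0 :=
    Multiset.filter_eq' T 0
  set W := T.filter (fun k => ¬ k = 0) with hWd
  rw [h1] at hsplit
  have hcard : T.count 0 + Multiset.card W = Multiset.card T := by
    conv_rhs => rw [← hsplit]
    simp
  obtain ⟨V, hV, hVs, hVn, hVc⟩ := gao_aux d n (T.count 0) hd hn _ W rfl
    (fun k => (Multiset.le_iff_count.1 (Multiset.filter_le _ T) k).trans (hmax k))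
  refine ⟨Multiset.replicate (n - Multiset.card V) 0 + V, ?_, by simp [hVs], by simp; omega⟩
  rw [← hsplit]
  refine add_le_add ?_ hV
  exact Multiset.replicate_le_replicate 0 |>.2 (by omega)

theorem exists_le_of_le_map {α β : Type} (f : α → β) (U : Multiset α) :
    ∀ V : Multiset β, V ≤ U.map f → ∃ V' ≤ U, V'.map f = V := by
  classical
  induction U using Multiset.induction_on with
  | empty =>
    intro V hV
    exact ⟨0, le_rfl, by simpa using (Multiset.le_zero.1 (by simpa using hV)).symm⟩
  | cons a U ih =>
    intro V hV
    rw [Multiset.map_cons] at hV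
    by_cases ha : f a ∈ V
    · obtain ⟨V1, rfl⟩ := Multiset.exists_cons_of_mem ha
      obtain ⟨V', h1, h2⟩ := ih V1 ((Multiset.cons_le_cons_iff _).1 hV)
      exact ⟨a ::ₘ V', (Multiset.cons_le_cons_iff _).2 h1, by simp [h2]⟩
    · obtain ⟨V', h1, h2⟩ := ih V ((Multiset.le_cons_of_notMem ha).1 hV)
      exact ⟨V', h1.trans (Multiset.le_cons_self _ _), h2⟩

theorem gao {K : Type} [AddCommGroup K] [Fintype K] (d n : ℕ)
    (hd : ∀ U : Multiset K, d ≤ Multiset.card U → ∃ V ≤ U, V ≠ 0 ∧ V.sum = 0)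
    (hn : Fintype.card K ≤ n) (hexp : ∀ k : K, n • k = 0)
    (T : Multiset K) (hT : n + d ≤ Multiset.card T + 1) :
    ∃ V ≤ T, V.sum = 0 ∧ Multiset.card V = n := by
  classical
  obtain ⟨g, -, hg⟩ := Finset.exists_max_image (Finset.univ : Finset K) (fun k => T.count k)
    ⟨0, by simp⟩
  have hct : ∀ k, (T.map (fun x => x - g)).count k = T.count (k + g) := by
    intro k
    have := Multiset.count_map_eq_count' (fun x : K => x - g) T sub_left_injective (k + g)
    simpa using this
  obtain ⟨V, hV, hVs, hVc⟩ := gao_zero d n hd hn (T.map (fun x => x - g)) (by simpa using hT) (by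
    intro k
    rw [hct, hct, zero_add]
    exact hg _ (by simp))
  obtain ⟨V', h1, rfl⟩ := exists_le_of_le_map _ T V hV
  rw [Multiset.card_map] at hVc
  refine ⟨V', h1, ?_, hVc⟩
  rw [Multiset.sum_map_sub] at hVs
  simpa [hVc, hexp] using hVs

end EGZ

namespace EGZ

section semi
variable {S : Type} [AddCommSemigroup S]

theorem mSum_add (A B : Multiset S) : mSum (A + B) = mSum A + mSum B := by
  simp [mSum]

theorem mSum_zero : mSum (0 : Multiset S) = 0 := by simp [mSum]

theorem mSum_ne_zero {A : Multiset S} (hA : A ≠ 0) : ∃ s : S, mSum A = (s : WithZero S) := by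
  induction A using Multiset.induction_on with
  | empty => exact absurd rfl hA
  | cons a A ih =>
    by_cases h : A = 0
    · subst h
      exact ⟨a, by simp [mSum]⟩
    · obtain ⟨s, hs⟩ := ih h
      refine ⟨a + s, ?_⟩
      rw [← Multiset.singleton_add, mSum_add, hs]
      simp [mSum]

/-- pigeonhole on partial sums -/
theorem pigeon [Fintype S] (F : Finset (WithZero S)) (T : Multiset S)
    (hF : ∀ A ≤ T, mSum A ∈ F) (hc : F.card ≤ Multiset.card T) :
    ∃ A C : Multiset S, A + C ≤ T ∧ C ≠ 0 ∧ mSum (A + C) = mSum A := by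
  obtain ⟨l, rfl⟩ := Quot.exists_rep T
  change ∀ A ≤ (l : Multiset S), _ at hF
  change F.card ≤ l.length at hc
  have htake : ∀ i, ((l.take i : List S) : Multiset S) ≤ (l : Multiset S) := fun i =>
    Multiset.coe_le.2 (List.take_sublist i l).subperm
  obtain ⟨i, hi, j, hj, hij, he⟩ := Finset.exists_ne_map_eq_of_card_lt_of_maps_to
    (s := Finset.range (l.length + 1)) (t := F)
    (f := fun i => mSum ((l.take i : List S) : Multiset S))
    (by simpa using Nat.lt_succ_of_le hc) (fun i _ => hF _ (htake i))
  wlog hlt : i < j generalizing i j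
  · exact this j hj i hi hij.symm he.symm (by omega)
  simp only [Finset.mem_range] at hi hj
  have hdec : ((l.take i : List S) : Multiset S) + (((l.take j).drop i : List S) : Multiset S)
      = ((l.take j : List S) : Multiset S) := by
    rw [Multiset.coe_add]
    congr 1
    have := List.take_append_drop i (l.take j)
    rwa [List.take_take, min_eq_left hlt.le] at this
  refine ⟨_, _, hdec.le.trans (htake j), ?_, by rw [hdec]; exact he.symm⟩
  intro h0
  have : ((l.take j).drop i).length = 0 := by
    rw [Multiset.coe_eq_zero] at h0
    rw [h0]; rfl
  rw [List.length_drop, List.length_take] at this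
  omega

theorem davC_spec [Fintype S] (T : Multiset S) (hT : DavC S ≤ Multiset.card T) : Reducible T := by
  classical
  have hne : {ℓ : ℕ | ∀ T : Multiset S, ℓ ≤ Multiset.card T → Reducible T}.Nonempty := by
    have : Finite (WithZero S) := inferInstanceAs (Finite (Option S))
    have := Fintype.ofFinite (WithZero S)
    refine ⟨Fintype.card (WithZero S), fun T hT => ?_⟩
    obtain ⟨A, C, hle, hC, he⟩ := pigeon Finset.univ T (by simp) hT
    have hCc : 0 < Multiset.card C := Multiset.card_pos.2 hC
    have hCT : C ≤ T := (Multiset.le_add_left C A).trans hle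
    refine ⟨T - C, ?_, Or.inl ?_⟩
    · refine lt_of_le_of_ne (Multiset.sub_le_self T C) ?_
      intro h
      have h1 := Multiset.card_sub hCT
      have h2 := Multiset.card_le_card hCT
      rw [h] at h1
      omega
    · obtain ⟨R, rfl⟩ := Multiset.le_iff_exists_add.1 hle
      have : A + C + R - C = A + R := by
        rw [show A + C + R = A + R + C by abel, Multiset.add_sub_cancel_right]
      rw [this, mSum_add, mSum_add (A + C), he]
  exact Nat.sInf_mem hne T hT

theorem davC_pos [Fintype S] : 0 < DavC S := by
  by_contra h
  obtain ⟨B, hB, -⟩ := davC_spec (0 : Multiset S) (by simp; omega)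
  exact absurd hB (by simp)

theorem period_spec [Fintype S] (a : S) : 0 < period a ∧ ∃ k, rep a (k + period a) = rep a k := by
  have hne : {t : ℕ | 0 < t ∧ ∃ k : ℕ, rep a (k + t) = rep a k}.Nonempty := by
    obtain ⟨i, j, hij, he⟩ := Finite.exists_ne_map_eq_of_infinite (rep a)
    wlog hlt : i < j generalizing i j
    · exact this j i hij.symm he.symm (by omega)
    exact ⟨j - i, by omega, i, by rw [Nat.add_sub_cancel' hlt.le]; exact he.symm⟩
  exact Nat.sInf_mem hne

theorem expS_pos [Fintype S] : 0 < expS S := by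
  rw [Nat.pos_iff_ne_zero]
  intro h
  obtain ⟨a, -, ha⟩ := Finset.lcm_eq_zero_iff.1 h
  have := (period_spec a).1
  simp_all

theorem card_le_kappa [Fintype S] : Fintype.card S ≤ kappa S := by
  have := expS_pos (S := S)
  have h1 := Nat.div_add_mod (Fintype.card S + expS S - 1) (expS S)
  have h2 := Nat.mod_lt (Fintype.card S + expS S - 1) this
  unfold kappa
  rw [mul_comm]
  omega

theorem period_dvd_kappa [Fintype S] (a : S) : period a ∣ kappa S :=
  (Finset.dvd_lcm (Finset.mem_univ a)).trans (Dvd.intro_left _ rfl)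

/-- existence of a submultiset of prescribed size between two multisets -/
theorem between {α : Type} {A T : Multiset α} (h : A ≤ T) (m : ℕ) (h1 : Multiset.card A ≤ m)
    (h2 : m ≤ Multiset.card T) : ∃ B, A ≤ B ∧ B ≤ T ∧ Multiset.card B = m := by
  obtain ⟨R, rfl⟩ := Multiset.le_iff_exists_add.1 h
  rw [Multiset.card_add] at h2
  obtain ⟨R', hR', hc⟩ : ∃ R' ≤ R, Multiset.card R' = m - Multiset.card A := by
    obtain ⟨l, rfl⟩ := Quot.exists_rep R
    refine ⟨(l.take (m - Multiset.card A) : List α), Multiset.coe_le.2 (List.take_sublist _ l).subperm, ?_⟩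
    change m ≤ _ + l.length at h2
    rw [Multiset.coe_card, List.length_take]
    omega
  exact ⟨A + R', Multiset.le_add_right _ _, by gcongr, by rw [Multiset.card_add]; omega⟩

/-- Reduction to short sequences. -/
theorem reduce [Fintype S] (P : Multiset S → Prop) 
    (hP : ∀ A B, EqSum A B → P B → P A) (m : ℕ) : ∀ T : Multiset S, Multiset.card T = m → P T →
    ∃ A ≤ T, P A ∧ Multiset.card A < DavC S := by
  induction m using Nat.strong_induction_on with
  | _ m ih =>
  intro T hm hT
  by_cases h : DavC S ≤ Multiset.card T
  · obtain ⟨B, hB, he⟩ := davC_spec T h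
    obtain ⟨A, hA, h1, h2⟩ := ih _ (by rw [← hm]; exact Multiset.card_lt_card hB) B rfl (hP _ _ he hT)
    exact ⟨A, hA.trans hB.le, h1, h2⟩
  · exact ⟨T, le_rfl, hT, by omega⟩

/-- case without identity -/
theorem case_nil [Fintype S] (hne : ¬ ∃ e : S, ∀ a : S, e + a = a)
    (z : S) (hz : ∀ a, z + a = z) (hnil : ∀ s : S, ∃ k, rep s k = z)
    (T : Multiset S) (hT : DavC S + kappa S - 1 ≤ Multiset.card T) :
    ∃ B : Multiset S, B ≤ T ∧ Multiset.card T - Multiset.card B = kappa S ∧ EqSum B T := by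
  classical
  have hD := davC_pos (S := S)
  have hk := card_le_kappa (S := S)
  have hzz : ∀ w : WithZero S, (z : WithZero S) + w = z := by
    intro w
    induction w using WithZero.recZeroCoe with
    | zero => simp
    | coe a => rw [← WithZero.coe_add, hz]
  have hE : ∀ A B : Multiset S, EqSum A B → mSum A = mSum B := by
    rintro A B (h | ⟨e, he, -⟩)
    · exact h
    · exact absurd ⟨e, he⟩ hne
  have hTz : mSum T = z := by
    by_contra hcon
    have : Finite (WithZero S) := inferInstanceAs (Finite (Option S))
    have := Fintype.ofFinite (WithZero S)
    have hcardW : Fintype.card (WithZero S) = Fintype.card S + 1 := by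
      rw [← Fintype.card_option]
      exact Fintype.card_congr (Equiv.refl _)
    have hnz : ∀ A ≤ T, mSum A ≠ z := by
      intro A hA h
      obtain ⟨R, rfl⟩ := Multiset.le_iff_exists_add.1 hA
      exact hcon (by rw [mSum_add, h, hzz])
    obtain ⟨A, C, hle, hC, he⟩ := pigeon (Finset.univ.erase (z : WithZero S)) T
      (fun A hA => by simpa using hnz A hA)
      (by rw [Finset.card_erase_of_mem (Finset.mem_univ _), Finset.card_univ, hcardW]; omega)
    obtain ⟨s, hs⟩ := mSum_ne_zero hC
    rw [mSum_add, hs] at he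
    have hrep : ∀ k, mSum A + (rep s k : S) = mSum A := by
      intro k
      induction k with
      | zero => exact he
      | succ k ih =>
        change mSum A + ((rep s k + s : S) : WithZero S) = _
        rw [WithZero.coe_add, ← add_assoc, ih, he]
    obtain ⟨k, hk⟩ := hnil s
    have := hrep k
    rw [hk, add_comm, hzz] at this
    exact hnz A ((Multiset.le_add_right A C).trans hle) this.symm
  obtain ⟨A, hA, hAz, hAc⟩ := reduce (fun T => mSum T = (z : WithZero S))
    (fun A B h hB => (hE A B h).trans hB) _ T rfl hTz
  obtain ⟨B, hAB, hBT, hBc⟩ := between hA (Multiset.card T - kappa S) (by omega) (by omega)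
  refine ⟨B, hBT, by omega, Or.inl ?_⟩
  obtain ⟨R, rfl⟩ := Multiset.le_iff_exists_add.1 hAB
  rw [mSum_add, hAz, hzz, hTz]

end semi

section mon
variable {S : Type} [AddCommMonoid S]

theorem mSum_eq {A : Multiset S} (hA : A ≠ 0) : mSum A = ((A.sum : S) : WithZero S) := by
  induction A using Multiset.induction_on with
  | empty => exact absurd rfl hA
  | cons a A ih =>
    by_cases h : A = 0
    · subst h
      simp [mSum]
    · rw [← Multiset.singleton_add, mSum_add, ih h, Multiset.sum_add, WithZero.coe_add]
      simp [mSum]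

theorem eqSum_iff (A B : Multiset S) : EqSum A B ↔ A.sum = B.sum := by
  have hid : ∀ e : S, (∀ a, e + a = a) → e = 0 := fun e he => by simpa using he 0
  by_cases hA : A = 0 <;> by_cases hB : B = 0
  · subst hA hB
    simp [EqSum]
  · subst hA
    unfold EqSum
    rw [mSum_eq hB, mSum_zero]
    constructor
    · rintro (h | ⟨e, he, h | h⟩)
      · simp at h
      · have := WithZero.coe_inj.1 h.2
        rw [this, hid e he]; simp
      · simp at h
    · intro h
      exact Or.inr ⟨0, by simp, Or.inl ⟨rfl, by rw [← h]; simp⟩⟩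
  · subst hB
    unfold EqSum
    rw [mSum_eq hA, mSum_zero]
    constructor
    · rintro (h | ⟨e, he, h | h⟩)
      · simp at h
      · simp at h
      · have := WithZero.coe_inj.1 h.1
        rw [this, hid e he]; simp
    · intro h
      exact Or.inr ⟨0, by simp, Or.inr ⟨by rw [h]; simp, rfl⟩⟩
  · unfold EqSum
    rw [mSum_eq hA, mSum_eq hB]
    constructor
    · rintro (h | ⟨e, he, h | h⟩)
      · exact WithZero.coe_inj.1 h
      · simp at h
      · simp at h
    · intro h
      exact Or.inl (by rw [h])

theorem rep_eq (a : S) (k : ℕ) : rep a k = (k + 1) • a := by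
  induction k with
  | zero => simp [rep]
  | succ k ih => rw [rep, ih, succ_nsmul a (k + 1)]

theorem kappa_unit [Fintype S] (g : AddUnits S) : kappa S • g = 0 := by
  obtain ⟨-, k, hk⟩ := period_spec (g : S)
  rw [rep_eq, rep_eq] at hk
  have h1 : (k + period (g : S) + 1) • g = (k + 1) • g := by
    ext
    simpa using hk
  have h2 : period (g : S) • g = 0 := by
    rw [show k + period (g : S) + 1 = period (g : S) + (k + 1) by ring, add_nsmul] at h1
    simpa using h1
  obtain ⟨c, hc⟩ := period_dvd_kappa (g : S)
  rw [hc, mul_comm, mul_nsmul', h2, nsmul_zero]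

theorem isAddUnit_sum {A : Multiset S} (h : IsAddUnit A.sum) : ∀ a ∈ A, IsAddUnit a := by
  intro a ha
  obtain ⟨B, rfl⟩ := Multiset.exists_cons_of_mem ha
  rw [Multiset.sum_cons] at h
  exact isAddUnit_of_add_isAddUnit_left h

theorem case_mon [Fintype S]
    (hdich : ∀ s : S, IsAddUnit s ∨ ∃ (m : ℕ) (z : S), (∀ y, z + y = z) ∧ m • s = z)
    (T : Multiset S) (hT : DavC S + kappa S - 1 ≤ Multiset.card T) :
    ∃ B : Multiset S, B ≤ T ∧ Multiset.card T - Multiset.card B = kappa S ∧ EqSum B T := by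
  classical
  have hD := davC_pos (S := S)
  have hk := card_le_kappa (S := S)
  simp only [eqSum_iff]
  by_cases hTz : ∃ z : S, (∀ y, z + y = z) ∧ T.sum = z
  · obtain ⟨z, hz, hTz⟩ := hTz
    obtain ⟨A, hA, hAz, hAc⟩ := reduce (fun T => T.sum = z)
      (fun A B h hB => ((eqSum_iff A B).1 h).trans hB) _ T rfl hTz
    obtain ⟨B, hAB, hBT, hBc⟩ := between hA (Multiset.card T - kappa S) (by omega) (by omega)
    refine ⟨B, hBT, by omega, ?_⟩
    obtain ⟨R, rfl⟩ := Multiset.le_iff_exists_add.1 hAB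
    rw [Multiset.sum_add, hAz, hz, hTz]
  have hsplit := Multiset.filter_add_not (fun s : S => IsAddUnit s) T
  set TG := T.filter (fun s : S => IsAddUnit s) with hTG
  set TN := T.filter (fun s : S => ¬ IsAddUnit s) with hTN
  have hN : ∀ s ∈ TN, ¬ IsAddUnit s := fun s hs => (Multiset.mem_filter.1 hs).2
  obtain ⟨TG', hTG'⟩ : ∃ TG' : Multiset (AddUnits S), TG'.map (fun g : AddUnits S => (g : S)) = TG := by
    have : ∀ s ∈ TG, ∃ g : AddUnits S, (g : S) = s := fun s hs => (Multiset.mem_filter.1 hs).2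
    haveI hl : CanLift S (AddUnits S) (fun g : AddUnits S => (g : S))
      (fun s => ∃ g : AddUnits S, (g : S) = s) := ⟨fun _ h => h⟩
    exact (Multiset.canLift (fun g : AddUnits S => (g : S))
      (fun s => ∃ g : AddUnits S, (g : S) = s)).prf TG this
  have hsumU : ∀ U : Multiset (AddUnits S), (U.map (fun g : AddUnits S => (g : S))).sum = ((U.sum : AddUnits S) : S) :=
    fun U => (map_multiset_sum (AddUnits.coeHom S) U).symm
  set x := TN.sum with hx
  have hxz : ¬ ∃ z : S, (∀ y, z + y = z) ∧ x = z := by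
    rintro ⟨z, hz, h⟩
    exact hTz ⟨z, hz, by rw [← hsplit, Multiset.sum_add, add_comm, ← hx, h, hz]⟩
  let H : AddSubgroup (AddUnits S) :=
    { carrier := {g | (g : S) + x = x}
      zero_mem' := by simp
      add_mem' := by
        intro a b ha hb
        simp only [Set.mem_ofPred_eq] at ha hb ⊢
        rw [AddUnits.val_add, add_assoc, hb, ha]
      neg_mem' := by
        intro a ha
        simp only [Set.mem_ofPred_eq] at ha ⊢
        conv_lhs => rw [← ha]
        simp }
  have hHmem : ∀ g : AddUnits S, g ∈ H ↔ (g : S) + x = x := fun g => Iff.rfl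
  have : Finite (AddUnits S) := Finite.of_injective (fun g : AddUnits S => (g : S)) AddUnits.val_injective
  have := Fintype.ofFinite (AddUnits S)
  have := Fintype.ofFinite (AddUnits S ⧸ H)
  have hmk : ∀ U : Multiset (AddUnits S),
      (U.map (fun g : AddUnits S => (g : AddUnits S ⧸ H))).sum = ((U.sum : AddUnits S) : AddUnits S ⧸ H) :=
    fun U => (map_multiset_sum (QuotientAddGroup.mk' H) U).symm
  have hcardK : Fintype.card (AddUnits S ⧸ H) ≤ kappa S := by
    have h1 : Fintype.card (AddUnits S ⧸ H) ≤ Fintype.card (AddUnits S) :=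
      Fintype.card_le_of_surjective _ (QuotientAddGroup.mk_surjective (s := H))
    have h2 : Fintype.card (AddUnits S) ≤ Fintype.card S :=
      Fintype.card_le_of_injective (fun g : AddUnits S => (g : S)) AddUnits.val_injective
    omega
  have hd : ∀ U : Multiset (AddUnits S ⧸ H), DavC S - Multiset.card TN ≤ Multiset.card U →
      ∃ V ≤ U, V ≠ 0 ∧ V.sum = 0 := by
    intro U hU
    let f : AddUnits S ⧸ H → S := fun k => ((Quotient.out k : AddUnits S) : S)
    have hf : ∀ V : Multiset (AddUnits S ⧸ H), ∃ g : AddUnits S, (V.map f).sum = g ∧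
        (g : AddUnits S ⧸ H) = V.sum := by
      intro V
      refine ⟨(V.map Quotient.out).sum, ?_, ?_⟩
      · rw [← hsumU, Multiset.map_map]; rfl
      · rw [← hmk, Multiset.map_map]
        congr 1
        conv_rhs => rw [← Multiset.map_id V]
        exact Multiset.map_congr rfl (fun k _ => Quotient.out_eq k)
    obtain ⟨B, hB, he⟩ := davC_spec (TN + U.map f) (by rw [Multiset.card_add, Multiset.card_map]; omega)
    rw [eqSum_iff] at he
    have hBdec : B ∩ TN + (B - TN) = B := by
      ext s
      simp only [Multiset.count_add, Multiset.count_inter, Multiset.count_sub]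
      omega
    obtain ⟨V0, hV0, hV0e⟩ := exists_le_of_le_map f U (B - TN)
      (by rw [Multiset.sub_le_iff_le_add]; exact hB.le.trans (by rw [add_comm]))
    obtain ⟨V, hV⟩ := Multiset.le_iff_exists_add.1 hV0
    obtain ⟨C, hC⟩ := Multiset.le_iff_exists_add.1 (Multiset.inter_le_right (s := B) (t := TN))
    obtain ⟨g0, hg0, hg0'⟩ := hf V0
    obtain ⟨g1, hg1, hg1'⟩ := hf V
    have he2 : (B ∩ TN).sum + (g0 : S) = (B ∩ TN).sum + C.sum + (g0 + g1) := by
      have h1 : B.sum = (B ∩ TN).sum + (g0 : S) := by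
        conv_lhs => rw [← hBdec]
        rw [Multiset.sum_add, ← hV0e, hg0]
      have h2 : (TN + U.map f).sum = (B ∩ TN).sum + C.sum + (g0 + g1) := by
        conv_lhs => rw [hC, hV]
        rw [Multiset.map_add, Multiset.sum_add, Multiset.sum_add, Multiset.sum_add, hg0, hg1]
      rw [← h1, ← h2, he]
    by_cases hC0 : C = 0
    · refine ⟨V, by rw [hV]; exact Multiset.le_add_left _ _, ?_, ?_⟩
      · rintro rfl
        apply hB.ne
        rw [← hBdec, ← hV0e, hV, add_zero]
        congr 1
        rw [hC0, add_zero] at hC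
        exact hC.symm
      · rw [hC0, add_zero] at hC
        rw [← hC, hC0, Multiset.sum_zero, add_zero, ← hx] at he2
        rw [← hg1', QuotientAddGroup.eq_zero_iff, hHmem]
        have h3 : (g0 : S) + x = g0 + (g1 + x) := by
          rw [add_comm, he2]; abel
        exact ((AddUnits.add_right_inj g0).1 h3).symm
    · exfalso
      have hw : ¬ IsAddUnit (C.sum + (g1 : S)) := by
        intro h
        have h1 : IsAddUnit C.sum := isAddUnit_of_add_isAddUnit_left h
        obtain ⟨c, hc⟩ := Multiset.exists_mem_of_ne_zero hC0
        exact hN c (by rw [hC]; exact Multiset.mem_add.2 (Or.inr hc)) (isAddUnit_sum h1 c hc)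
      obtain ⟨m, z, hz, hm⟩ := (hdich _).resolve_left hw
      have hb : (B ∩ TN).sum + (C.sum + (g1 : S)) = (B ∩ TN).sum := by
        have h3 : (g0 : S) + (B ∩ TN).sum = g0 + ((B ∩ TN).sum + (C.sum + (g1 : S))) := by
          rw [add_comm, he2]; abel
        exact ((AddUnits.add_right_inj g0).1 h3).symm
      have hbm : ∀ m : ℕ, (B ∩ TN).sum + m • (C.sum + (g1 : S)) = (B ∩ TN).sum := by
        intro m
        induction m with
        | zero => simp
        | succ m ih => rw [succ_nsmul, ← add_assoc, ih, hb]
      have h4 := hbm m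
      rw [hm, add_comm, hz] at h4
      exact hxz ⟨z, hz, by rw [hx, hC, Multiset.sum_add, ← h4, hz]⟩
  have hdpos : 0 < DavC S - Multiset.card TN := by
    by_contra h
    obtain ⟨V, hV, hV0, -⟩ := hd 0 (by simp; omega)
    exact hV0 (Multiset.le_zero.1 hV)
  have hcT : Multiset.card TG' + Multiset.card TN = Multiset.card T := by
    rw [← hsplit, Multiset.card_add, ← hTG', Multiset.card_map]
  obtain ⟨V, hV, hVs, hVc⟩ := gao (DavC S - Multiset.card TN) (kappa S) hd hcardK (by
      intro k
      obtain ⟨g, rfl⟩ := QuotientAddGroup.mk_surjective k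
      rw [← QuotientAddGroup.mk_nsmul, kappa_unit]; rfl)
    (TG'.map (fun g : AddUnits S => (g : AddUnits S ⧸ H))) (by rw [Multiset.card_map]; omega)
  obtain ⟨U, hU, rfl⟩ := exists_le_of_le_map _ TG' V hV
  rw [Multiset.card_map] at hVc
  rw [hmk, QuotientAddGroup.eq_zero_iff, hHmem] at hVs
  obtain ⟨R, rfl⟩ := Multiset.le_iff_exists_add.1 hU
  have hTe : T = R.map (fun g : AddUnits S => (g : S)) + TN + U.map (fun g : AddUnits S => (g : S)) := by
    rw [← hsplit, ← hTG', Multiset.map_add]; abel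
  refine ⟨R.map (fun g : AddUnits S => (g : S)) + TN, ?_, ?_, ?_⟩
  · conv_rhs => rw [hTe]
    exact Multiset.le_add_right _ _
  · rw [hTe, Multiset.card_add _ (U.map _), Multiset.card_map _ U]; omega
  · conv_rhs => rw [hTe]
    rw [Multiset.sum_add, Multiset.sum_add, Multiset.sum_add, hsumU U, ← hx, add_assoc, add_comm x, hVs]

end mon

section si
variable {S : Type} [AddCommSemigroup S]

theorem rep_add (a : S) (i j : ℕ) : rep a i + rep a j = rep a (i + j + 1) := by
  induction j with
  | zero => rfl
  | succ j ih =>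
    change rep a i + (rep a j + a) = rep a (i + j + 1) + a
    rw [← add_assoc, ih]

theorem exists_idem [Fintype S] (a : S) : ∃ k, rep a k + rep a k = rep a k := by
  obtain ⟨hp, k, hk⟩ := period_spec a
  have h1 : ∀ i, rep a (k + i + period a) = rep a (k + i) := by
    intro i
    induction i with
    | zero => exact hk
    | succ i ih =>
      rw [show k + (i + 1) + period a = (k + i + period a) + 1 by ring]
      change rep a (k + i + period a) + a = rep a (k + i) + a
      rw [ih]
  have h2 : ∀ n i, rep a (k + i + n * period a) = rep a (k + i) := by
    intro n
    induction n with
    | zero => intro i; simp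
    | succ n ih =>
      intro i
      rw [show k + i + (n + 1) * period a = k + (i + n * period a) + period a by ring, h1,
        ← add_assoc, ih]
  have hle : k + 1 ≤ (k + 1) * period a := Nat.le_mul_of_pos_right _ hp
  obtain ⟨i, hi⟩ : ∃ i, k + i + 1 = (k + 1) * period a := ⟨(k + 1) * period a - 1 - k, by omega⟩
  refine ⟨k + i, ?_⟩
  rw [rep_add]
  have := h2 (k + 1) i
  rw [← hi] at this
  exact this

/-- weak form of Grillet's theorem -/
theorem dich (hsi : SubdirectlyIrreducible S) (e : S) (he : e + e = e) :
    (∀ a, e + a = a) ∨ (∀ a, e + a = e) := by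
  let c1 : AddCon S :=
    { r := fun x y => e + x = e + y
      iseqv := ⟨fun _ => rfl, fun h => h.symm, fun h h' => h.trans h'⟩
      add' := by
        intro w x y z h1 h2
        change e + (w + y) = e + (x + z)
        rw [← add_assoc, h1, add_assoc, add_left_comm, h2, add_left_comm] }
  let c2 : AddCon S :=
    { r := fun x y => x = y ∨ (e + x = x ∧ e + y = y)
      iseqv := ⟨fun _ => Or.inl rfl, fun h => by
          rcases h with h | h
          · exact Or.inl h.symm
          · exact Or.inr ⟨h.2, h.1⟩, fun h h' => by
          rcases h with rfl | h
          · exact h'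
          · rcases h' with rfl | h'
            · exact Or.inr h
            · exact Or.inr ⟨h.1, h'.2⟩⟩
      add' := by
        intro w x y z h1 h2
        change w + y = x + z ∨ (e + (w + y) = w + y ∧ e + (x + z) = x + z)
        rcases h1 with rfl | h1
        · rcases h2 with rfl | h2
          · exact Or.inl rfl
          · exact Or.inr ⟨by rw [add_left_comm, h2.1], by rw [add_left_comm, h2.2]⟩
        · exact Or.inr ⟨by rw [← add_assoc, h1.1], by rw [← add_assoc, h1.2]⟩ }
  have hc1 : ∀ x y : S, ((x : c1.Quotient) = y) ↔ e + x = e + y := fun x y => c1.eq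
  have hc2 : ∀ x y : S, ((x : c2.Quotient) = y) ↔ (x = y ∨ (e + x = x ∧ e + y = y)) :=
    fun x y => c2.eq
  let c : Bool → AddCon S := fun b => if b then c1 else c2
  obtain ⟨i, hi⟩ := hsi Bool (fun b => (c b).Quotient) (fun s b => (s : (c b).Quotient)) (by
      intro x y hxy
      have h1 := (hc1 x y).1 (congrFun hxy true)
      have h2 := (hc2 x y).1 (congrFun hxy false)
      rcases h2 with h2 | h2
      · exact h2
      · rw [← h2.1, h1, h2.2])
    (fun a b => rfl)
    (fun i q => by
      obtain ⟨s, hs⟩ := Quotient.exists_rep q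
      exact ⟨s, hs⟩)
  cases i with
  | true =>
    left
    intro a
    exact hi ((hc1 _ _).2 (by rw [← add_assoc, he]))
  | false =>
    right
    intro a
    exact hi ((hc2 _ _).2 (Or.inr ⟨by rw [← add_assoc, he], he⟩))

theorem nonempty_of_si (hsi : SubdirectlyIrreducible S) : Nonempty S := by
  by_contra h
  rw [not_nonempty_iff] at h
  obtain ⟨i, -⟩ := hsi Empty (fun _ => PUnit) (fun _ _ => PUnit.unit)
    (fun x => (h.false x).elim) (fun a b => rfl) (fun i => i.elim)
  exact i.elim

theorem main [Fintype S] (hsi : SubdirectlyIrreducible S)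
    (T : Multiset S) (hT : DavC S + kappa S - 1 ≤ Multiset.card T) :
    ∃ B : Multiset S, B ≤ T ∧ Multiset.card T - Multiset.card B = kappa S ∧ EqSum B T := by
  by_cases hid : ∃ e : S, ∀ a : S, e + a = a
  · obtain ⟨e, he⟩ := hid
    rename_i inst _
    letI Z : Zero S := ⟨e⟩
    letI I : AddCommMonoid S :=
      { inst with
        zero := e
        nsmul_zero := fun _ => rfl
        nsmul_succ := fun _ _ => rfl
        zero_add := he
        add_zero := fun a => (add_comm a e).trans (he a)
        nsmul := nsmulRec }
    refine case_mon (S := S) ?_ T hT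
    intro s
    obtain ⟨k, hk⟩ := exists_idem s
    rcases dich hsi _ hk with h | h
    · left
      have h0 : rep s k = 0 := by
        have := h 0
        rwa [add_zero] at this
      rw [rep_eq, succ_nsmul] at h0
      exact IsAddUnit.of_add_eq_zero_right _ h0
    · exact Or.inr ⟨k + 1, rep s k, h, (rep_eq s k).symm⟩
  · have hz : ∀ s : S, ∃ k, ∀ a, rep s k + a = rep s k := by
      intro s
      obtain ⟨k, hk⟩ := exists_idem s
      exact ⟨k, (dich hsi _ hk).resolve_left (fun h => hid ⟨_, h⟩)⟩
    obtain ⟨s0⟩ := nonempty_of_si hsi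
    obtain ⟨k0, hk0⟩ := hz s0
    refine case_nil hid (rep s0 k0) hk0 ?_ T hT
    intro s
    obtain ⟨k, hk⟩ := hz s
    exact ⟨k, by rw [← hk (rep s0 k0), add_comm, hk0]⟩

end si

end EGZ

/-- For a finite subdirectly irreducible commutative semigroup `S`,
`E(S) ≤ D(S) + κ(S) − 1`. -/
theorem E_le_of_subdirectlyIrreducible (S : Type) [AddCommSemigroup S] [Fintype S]
    (hsi : SubdirectlyIrreducible S) :
    EGZ.EC S ≤ EGZ.DavC S + EGZ.kappa S - 1 := by
  apply Nat.sInf_le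
  refine ⟨?_, EGZ.main hsi⟩
  have h1 := EGZ.davC_pos (S := S)
  have h2 := EGZ.card_le_kappa (S := S)
  have := EGZ.nonempty_of_si hsi
  have h3 := Fintype.card_pos (α := S)
  omega
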